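/- Let k > 2 be odd and let C^k be the cycle graph on vertices {x_i}_{i∈Z_k}, acted on by the dihedral group D_k of order 2k (generated by the rotation r·x_i = x_{i+1} and the reflection s·x_i = x_{-i}) and by its cyclic subgroup Z_k = ⟨r⟩. Then for all n ≥ 1, the number of D_k-orbits of proper n-colorings is half the number of Z_k-orbits: χ_{C^k,D_k}(n) = (1/2) · χ_{C^k,Z_k}(n). In particular, if k = p > 2 is prime, |Col_n(C^p)/D_p| = (1/(2p)) · |Col_n(C^p)| for all n ≥ 1. -/

import Mathlib

/-!
A symmetry fixing a proper coloring cannot move a vertex to one of its neighbors. For odd `k` every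
reflection of the cycle moves some vertex to a neighbor, because `-(x + i) = x + 1` is solvable in
`ZMod k`; so all stabilizers of colorings lie in the index-two rotation subgroup, and every dihedral
orbit splits into exactly two rotation orbits. For `k` prime, each nontrivial rotation has
the unit rotation among its powers, so the dihedral group acts freely on the colorings.
-/

open MulAction

section Orbits

variable {G X : Type*} [Group G] [MulAction G X]

theorem card_quot_eq_card_orbitRel_quotient {R : X → X → Prop}
    (hR : ∀ x y, R x y ↔ y ∈ orbit G x) :
    Nat.card (Quot R) = Nat.card (orbitRel.Quotient G X) :=
  Nat.card_congr <| Quot.congrRight fun x y => (hR x y).trans mem_orbit_symm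

theorem card_eq_card_orbitRel_quotient_mul_card (h : ∀ x : X, stabilizer G x = ⊥) :
    Nat.card X = Nat.card (orbitRel.Quotient G X) * Nat.card G := by
  rw [Nat.card_congr (selfEquivOrbitsQuotientProd h), Nat.card_prod]

theorem card_orbitRel_quotient_subgroup {H : Subgroup G} (h : ∀ x : X, stabilizer G x ≤ H) :
    Nat.card (orbitRel.Quotient H X) = Nat.card (orbitRel.Quotient G X) * H.index := by
  -- The coset `gH` corresponds to the `H`-orbit of `g⁻¹ • x`, for `x` a representative of `ω`.
  let f : orbitRel.Quotient G X × G ⧸ H → orbitRel.Quotient H X := fun p =>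
    p.2.liftOn' (fun g => ⟦g⁻¹ • p.1.out⟧) fun a b hab => Quotient.sound' <| by
      rw [QuotientGroup.leftRel_apply] at hab
      exact ⟨⟨a⁻¹ * b, hab⟩, by simp [Subgroup.smul_def, mul_smul]⟩
  have hinj : Function.Injective f := by
    rintro ⟨ω, a⟩ ⟨ω', b⟩ hab
    induction a using QuotientGroup.induction_on with | _ a
    induction b using QuotientGroup.induction_on with | _ b
    obtain ⟨⟨g, hg⟩, hgab : g • b⁻¹ • ω'.out = a⁻¹ • ω.out⟩ := Quotient.exact' hab
    obtain rfl : ω = ω' := by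
      rw [← ω.out_eq', ← ω'.out_eq']
      exact Quotient.sound' ⟨a * g * b⁻¹, by simp [mul_smul, hgab]⟩
    have hfix : g * b⁻¹ * a ∈ H := h (a⁻¹ • ω.out) <| by
      rw [mem_stabilizer_iff, mul_smul, smul_inv_smul, mul_smul, hgab]
    have hba : b⁻¹ * a ∈ H := by
      rwa [mul_assoc, H.mul_mem_cancel_left hg] at hfix
    rw [QuotientGroup.eq.mpr hba]
  have hsurj : Function.Surjective f := by
    intro ω
    induction ω using Quotient.inductionOn' with | _ x
    obtain ⟨g, hg : g • x = _⟩ := Quotient.mk_out (s := orbitRel G X) x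
    exact ⟨(⟦x⟧, (g : G ⧸ H)), congrArg _ <| inv_smul_eq_iff.mpr hg.symm⟩
  rw [← Nat.card_congr (Equiv.ofBijective f ⟨hinj, hsurj⟩), Nat.card_prod, Subgroup.index]

end Orbits

section Coloring

attribute [local instance] arrowAction

variable {G V : Type*} [Group G] [MulAction G V] (Γ : SimpleGraph V)
  [CovariantClass G V (· • ·) Γ.Adj] (α : Type*)

variable (G) in
/-- The proper `α`-colorings of a graph `Γ` on which `G` acts by automorphisms, as a `G`-stable
set of functions; the action is `(g • c) v = c (g⁻¹ • v)`. -/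
def properColorings : SubMulAction G (V → α) where
  carrier := {c | ∀ u v, Γ.Adj u v → c u ≠ c v}
  smul_mem' g _ hc _ _ huv := hc _ _ (CovariantClass.elim g⁻¹ huv)

variable {Γ α}

theorem properColorings.smul_eq_iff {g : G} {c c' : properColorings G Γ α} :
    g • c = c' ↔ ∀ v, c'.1 v = c.1 (g⁻¹ • v) := by
  simp only [Subtype.ext_iff, funext_iff, eq_comm (b := c'.1 _)]
  rfl

theorem properColorings.not_adj_smul_of_mem_stabilizer {g : G} {c : properColorings G Γ α}
    (hg : g ∈ stabilizer G c) (v : V) : ¬ Γ.Adj v (g • v) := by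
  intro hadj
  have hc := properColorings.smul_eq_iff.mp hg (g • v)
  rw [inv_smul_smul] at hc
  exact c.2 _ _ hadj hc.symm

variable (G Γ α)

theorem card_quot_proper_coloring :
    Nat.card (Quot fun c c' : {c : V → α // ∀ u v, Γ.Adj u v → c u ≠ c v} =>
      ∃ g : G, ∀ v, c'.1 v = c.1 (g⁻¹ • v)) =
    Nat.card (orbitRel.Quotient G (properColorings G Γ α)) :=
  card_quot_eq_card_orbitRel_quotient (X := properColorings G Γ α) fun _ _ =>
    exists_congr fun _ => properColorings.smul_eq_iff.symm

variable {G}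

theorem card_quot_proper_coloring_subgroup (H : Subgroup G) :
    Nat.card (Quot fun c c' : {c : V → α // ∀ u v, Γ.Adj u v → c u ≠ c v} =>
      ∃ g : G, g ∈ H ∧ ∀ v, c'.1 v = c.1 (g⁻¹ • v)) =
    Nat.card (orbitRel.Quotient H (properColorings G Γ α)) :=
  card_quot_eq_card_orbitRel_quotient (G := H) (X := properColorings G Γ α) fun _ _ => by
    simp only [← properColorings.smul_eq_iff, mem_orbit_iff, Subtype.exists, Subgroup.smul_def,
      exists_prop]

end Coloring

section Dihedral

open DihedralGroup

variable {k : ℕ}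

theorem r_mem_zpowers_r_one (i : ZMod k) : r i ∈ Subgroup.zpowers (r 1 : DihedralGroup k) := by
  obtain ⟨m, rfl⟩ := ZMod.intCast_surjective i
  exact ⟨m, r_one_zpow m⟩

theorem sr_notMem_zpowers_r_one (i : ZMod k) :
    sr i ∉ Subgroup.zpowers (r 1 : DihedralGroup k) := by
  rintro ⟨m, hm⟩
  simp at hm

theorem index_zpowers_r_one : (Subgroup.zpowers (r 1 : DihedralGroup k)).index = 2 := by
  refine Subgroup.index_eq_two_iff_exists_notMem_and.mpr ⟨sr 0, sr_notMem_zpowers_r_one 0, ?_⟩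
  rintro (i | i)
  · exact .inr (r_mem_zpowers_r_one i)
  · exact .inl (sr_mul_sr i 0 ▸ r_mem_zpowers_r_one _)

/-- The cycle on `ZMod k`, with edges joining `i` and `i + 1`; `SimpleGraph.fromRel` symmetrizes the
relation and discards loops. -/
abbrev zmodCycle (k : ℕ) : SimpleGraph (ZMod k) :=
  SimpleGraph.fromRel fun i j => j = i + 1

namespace zmodCycle

theorem adj_add_one [Nontrivial (ZMod k)] (x : ZMod k) : (zmodCycle k).Adj x (x + 1) := by
  simp

variable [MulAction (DihedralGroup k) (ZMod k)]
  (hr : ∀ x : ZMod k, (r 1 : DihedralGroup k) • x = x + 1)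
include hr

theorem r_smul (i x : ZMod k) : (r i : DihedralGroup k) • x = x + i := by
  obtain ⟨m, rfl⟩ := ZMod.intCast_surjective i
  have hperm : toPermHom (DihedralGroup k) (ZMod k) (r 1) = Equiv.addRight 1 := Equiv.ext hr
  have hpow := congrArg (· ^ m) hperm
  simp only [← map_zpow, r_one_zpow, Equiv.zsmul_addRight, zsmul_one] at hpow
  exact Equiv.congr_fun hpow x

variable (hs : ∀ x : ZMod k, (sr 0 : DihedralGroup k) • x = -x)
include hs

theorem sr_smul (i x : ZMod k) : (sr i : DihedralGroup k) • x = -(x + i) := by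
  rw [← zero_add i, ← sr_mul_r, mul_smul, hs, r_smul hr, zero_add]

theorem covariantClass_smul_adj :
    CovariantClass (DihedralGroup k) (ZMod k) (· • ·) (zmodCycle k).Adj where
  elim g u v huv := by
    refine ⟨(MulAction.injective g).ne huv.1, ?_⟩
    obtain i | i := g
    · simp only [r_smul hr]
      exact huv.2.imp (by rintro rfl; ring) (by rintro rfl; ring)
    · simp only [sr_smul hr hs]
      exact huv.2.symm.imp (by rintro rfl; ring) (by rintro rfl; ring)

theorem exists_sr_smul_eq_add_one (hodd : Odd k) (i : ZMod k) :
    ∃ x : ZMod k, (sr i : DihedralGroup k) • x = x + 1 := by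
  obtain ⟨m, hm⟩ := hodd
  have hzero : ((2 * m + 1 : ℕ) : ZMod k) = 0 := (ZMod.natCast_eq_zero_iff _ _).mpr hm.dvd
  push_cast at hzero
  -- `2 * m = -1` in `ZMod k`, so `m * (1 + i)` solves `-(x + i) = x + 1`.
  exact ⟨m * (1 + i), by rw [sr_smul hr hs]; linear_combination -(1 + i) * hzero⟩

attribute [local instance] arrowAction

variable [CovariantClass (DihedralGroup k) (ZMod k) (· • ·) (zmodCycle k).Adj] {α : Type*}
  (c : properColorings (DihedralGroup k) (zmodCycle k) α)

theorem sr_notMem_stabilizer [Nontrivial (ZMod k)] (hodd : Odd k) (i : ZMod k) :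
    sr i ∉ stabilizer (DihedralGroup k) c := fun hc => by
  obtain ⟨x, hx⟩ := exists_sr_smul_eq_add_one hr hs hodd i
  exact properColorings.not_adj_smul_of_mem_stabilizer hc x (hx ▸ adj_add_one x)

theorem stabilizer_le_zpowers_r_one [Nontrivial (ZMod k)] (hodd : Odd k) :
    stabilizer (DihedralGroup k) c ≤ Subgroup.zpowers (r 1) := by
  rintro (i | i) hc
  · exact r_mem_zpowers_r_one i
  · exact absurd hc (sr_notMem_stabilizer hr hs c hodd i)

theorem stabilizer_eq_bot_of_prime [Fact k.Prime] (hodd : Odd k) :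
    stabilizer (DihedralGroup k) c = ⊥ := by
  refine (Subgroup.eq_bot_iff_forall _).mpr ?_
  rintro (i | i) hc
  · obtain rfl | hi := eq_or_ne i 0
    · exact r_zero
    have hpow : (r i : DihedralGroup k) ^ i⁻¹.val = r 1 := by
      rw [r_pow, ZMod.natCast_zmod_val, mul_inv_cancel₀ hi]
    have hone : r 1 ∈ stabilizer (DihedralGroup k) c := hpow ▸ pow_mem hc _
    exact absurd (hr 0 ▸ adj_add_one 0) (properColorings.not_adj_smul_of_mem_stabilizer hone 0)
  · exact absurd hc (sr_notMem_stabilizer hr hs c hodd i)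

end zmodCycle

end Dihedral

/-- Let `k > 2` be odd and let `C^k` be the cycle graph on the vertices
`{x_i}_{i ∈ Z_k}` (here the vertex set is `ZMod k` with `i ~ i+1`), acted on by the
dihedral group `D_k` of order `2k` — the action being determined by the rotation
`r • x = x + 1` and the reflection `s • x = -x` — and by its cyclic subgroup
`Z_k = ⟨r⟩`.  Then for all `n ≥ 1`, the number of `D_k`-orbits of proper `n`-colorings is
half the number of `Z_k`-orbits: `χ_{C^k,D_k}(n) = (1/2) · χ_{C^k,Z_k}(n)`.  In
particular, if `k = p > 2` is prime, `|Col_n(C^p)/D_p| = (1/(2p)) · |Col_n(C^p)|` for all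
`n ≥ 1`. -/
theorem stmt_19 (k : ℕ) (hk : 2 < k) (hodd : Odd k)
    [MulAction (DihedralGroup k) (ZMod k)]
    (hr : ∀ x : ZMod k, (DihedralGroup.r 1 : DihedralGroup k) • x = x + 1)
    (hs : ∀ x : ZMod k, (DihedralGroup.sr 0 : DihedralGroup k) • x = -x) :
    (∀ n : ℕ, 1 ≤ n →
      (Nat.card (Quot (fun c c' : {c : ZMod k → Fin n //
          ∀ u v : ZMod k, (SimpleGraph.fromRel (fun i j : ZMod k => j = i + 1)).Adj u v →
            c u ≠ c v} =>
        ∃ g : DihedralGroup k, ∀ x : ZMod k, c'.1 x = c.1 (g⁻¹ • x))) : ℚ) =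
      (1 / 2 : ℚ) *
        Nat.card (Quot (fun c c' : {c : ZMod k → Fin n //
            ∀ u v : ZMod k, (SimpleGraph.fromRel (fun i j : ZMod k => j = i + 1)).Adj u v →
              c u ≠ c v} =>
          ∃ g : DihedralGroup k, g ∈ Subgroup.zpowers (DihedralGroup.r 1 : DihedralGroup k) ∧
            ∀ x : ZMod k, c'.1 x = c.1 (g⁻¹ • x)))) ∧
    (k.Prime → ∀ n : ℕ, 1 ≤ n →
      (Nat.card (Quot (fun c c' : {c : ZMod k → Fin n //
          ∀ u v : ZMod k, (SimpleGraph.fromRel (fun i j : ZMod k => j = i + 1)).Adj u v →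
            c u ≠ c v} =>
        ∃ g : DihedralGroup k, ∀ x : ZMod k, c'.1 x = c.1 (g⁻¹ • x))) : ℚ) =
      (1 / (2 * k) : ℚ) *
        Nat.card {c : ZMod k → Fin n //
          ∀ u v : ZMod k, (SimpleGraph.fromRel (fun i j : ZMod k => j = i + 1)).Adj u v →
            c u ≠ c v}) := by
  have : Fact (1 < k) := ⟨by omega⟩
  have := zmodCycle.covariantClass_smul_adj hr hs
  refine ⟨fun n _ => ?_, fun hprime n _ => ?_⟩
  · rw [card_quot_proper_coloring (DihedralGroup k) (zmodCycle k),
      card_quot_proper_coloring_subgroup (zmodCycle k),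
      card_orbitRel_quotient_subgroup fun c =>
        zmodCycle.stabilizer_le_zpowers_r_one hr hs c hodd,
      index_zpowers_r_one]
    push_cast
    ring
  · have : Fact k.Prime := ⟨hprime⟩
    have hfree := card_eq_card_orbitRel_quotient_mul_card fun c =>
      zmodCycle.stabilizer_eq_bot_of_prime (α := Fin n) hr hs c hodd
    have hk0 : (k : ℚ) ≠ 0 := mod_cast hprime.ne_zero
    rw [card_quot_proper_coloring (DihedralGroup k) (zmodCycle k)]
    change _ = _ * (Nat.card (properColorings (DihedralGroup k) (zmodCycle k) (Fin n)) : ℚ)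
    rw [hfree, DihedralGroup.nat_card]
    push_cast
    field_simp
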